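/- For every k ∈ ℕ₀ and every d ∈ ℕ, there exists a finite abelian group G such that SD_k(G) ≥ D*(G) + d. -/

import Mathlib

open Multiset

/-- A sequence (finite multiset) over `G` is zero-sumfree if every nonempty
subsequence has nonzero sum. -/
def IsZeroSumfree {G : Type*} [AddCommMonoid G] (S : Multiset G) : Prop :=
  ∀ T ≤ S, T ≠ 0 → T.sum ≠ 0

/-- A minimal zero-sum sequence: a nonempty sequence with sum zero all of whose
nonempty proper subsequences have nonzero sum. -/
def IsMinimalZeroSum {G : Type*} [AddCommMonoid G] (S : Multiset G) : Prop :=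
  S ≠ 0 ∧ S.sum = 0 ∧ ∀ T ≤ S, T ≠ 0 → T ≠ S → T.sum ≠ 0

/-- The cumulated multiplicity of level `ℓ` of a sequence:
`cm_ℓ(S) = Σ_{g ∈ G} max {0, v_g(S) − ℓ}`. -/
noncomputable def cmul {G : Type*} [AddCommMonoid G] (ℓ : ℕ) (S : Multiset G) : ℕ :=
  letI := Classical.decEq G
  ∑ g ∈ S.toFinset, (S.count g - ℓ)

/-- `SD_{(k,ℓ)}(G)`: the maximum length of a minimal zero-sum sequence `S` over `G`
with `cm_ℓ(S) ≤ k`. -/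
noncomputable def SDpair (G : Type*) [AddCommMonoid G] (k ℓ : ℕ) : ℕ :=
  sSup {m | ∃ S : Multiset G, IsMinimalZeroSum S ∧ cmul ℓ S ≤ k ∧ Multiset.card S = m}

/-- `SD_k(G)`: the `k`-th Strong Davenport constant. -/
noncomputable def SDk (G : Type*) [AddCommMonoid G] (k : ℕ) : ℕ := SDpair G k 1

/-- The Strong Davenport constant `SD(G) = SD_0(G)`. -/
noncomputable def SD (G : Type*) [AddCommMonoid G] : ℕ := SDk G 0

/-- The Olson constant `Ol(G) = SD_1(G)`. -/
noncomputable def Ol (G : Type*) [AddCommMonoid G] : ℕ := SDk G 1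

/-- `ol_k(G)`: the maximum length of a zero-sumfree sequence `S` over `G` with
`cm(S) ≤ k`. -/
noncomputable def olk (G : Type*) [AddCommMonoid G] (k : ℕ) : ℕ :=
  sSup {m | ∃ S : Multiset G, IsZeroSumfree S ∧ cmul 1 S ≤ k ∧ Multiset.card S = m}

/-- `Ol_k(G)`: the smallest integer `ℓ` such that every sequence `S` over `G` with
`cm(S) ≤ k` and `|S| ≥ ℓ` has a nonempty zero-sum subsequence. -/
noncomputable def Olk (G : Type*) [AddCommMonoid G] (k : ℕ) : ℕ :=
  sInf {m | ∀ S : Multiset G, cmul 1 S ≤ k → m ≤ Multiset.card S →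
    ∃ T, T ≤ S ∧ T ≠ 0 ∧ T.sum = 0}

/-- The Davenport constant `D(G)`: the maximum length of a minimal zero-sum
sequence over `G`. -/
noncomputable def DavenportD (G : Type*) [AddCommMonoid G] : ℕ :=
  sSup {m | ∃ S : Multiset G, IsMinimalZeroSum S ∧ Multiset.card S = m}

/-!
Baayen's sequence in `C_2^{4t} ⊕ C_{4t+2}` is squarefree, zero-sumfree and has length `D*`: with
`e_0, …, e_{4t-1}` a basis of `C_2^{4t}` and `e_{4t}` the sum of the basis, it consists of the
elements `(e_i, 1)` and `(e_i, 2t + 2)`. The only linear relation between the `e_i` is that they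
sum to zero, so if the terms `(e_i, 1)` for `i ∈ X` and `(e_i, 2t + 2)` for `i ∈ Y` have sum zero,
then `X = Y` or `X` and `Y` are complementary. In the first case `4t + 2` divides `|X| (2t + 3)`,
which forces `X = ∅`; in the second case the last coordinate is `-1` modulo `2t + 1`.

Placing one copy of such a sequence in each factor of `G^m` gives a squarefree zero-sumfree
sequence of length `m D*(G) = D*(G^m) + m - 1`. For `m ≥ 2`, appending the negative of its sum
keeps it squarefree and makes it a minimal zero-sum sequence of length `D*(G^m) + m`.
-/

section ZeroSum

theorem exists_le_map_eq_of_le_map {α β : Type*} {f : α → β} {S : Multiset α} {T : Multiset β}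
    (hT : T ≤ S.map f) : ∃ U ≤ S, U.map f = T := by
  induction S using Quotient.inductionOn with
  | h l =>
    induction T using Quotient.inductionOn with
    | h l' =>
      obtain ⟨l₁, hperm, hsub⟩ : List.Subperm l' (l.map f) := hT
      obtain ⟨l₂, hl₂, rfl⟩ := List.sublist_map_iff.mp hsub
      exact ⟨l₂, hl₂.subperm, Quotient.sound hperm⟩

theorem sum_filter_ne_zero_eq_sum {M : Type*} [AddCommMonoid M] [DecidableEq M]
    (S : Multiset M) : (S.filter (· ≠ 0)).sum = S.sum := by
  have hzero : (S.filter (¬ · ≠ 0)).sum = 0 :=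
    Multiset.sum_eq_zero fun x hx => not_not.mp (Multiset.mem_filter.mp hx).2
  rw [← Multiset.sum_filter_add_sum_filter_not (s := S) (· ≠ 0), hzero, add_zero]

theorem IsZeroSumfree.zero_notMem {G : Type*} [AddCommMonoid G] {S : Multiset G}
    (hS : IsZeroSumfree S) : (0 : G) ∉ S := fun h =>
  hS {0} (Multiset.singleton_le.mpr h) (Multiset.singleton_ne_zero 0) (Multiset.sum_singleton 0)

theorem isZeroSumfree_map_univ {κ G : Type*} [Fintype κ] [AddCommMonoid G] {f : κ → G}
    (hf : ∀ T : Finset κ, ∑ x ∈ T, f x = 0 → T = ∅) :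
    IsZeroSumfree ((Finset.univ : Finset κ).val.map f) := by
  intro T hT hT0 hsum
  obtain ⟨U, hU, rfl⟩ := exists_le_map_eq_of_le_map hT
  have hempty := hf ⟨U, Multiset.nodup_of_le hU Finset.univ.nodup⟩ hsum
  exact hT0 (by rw [show U = 0 from congrArg Finset.val hempty, Multiset.map_zero])

theorem IsMinimalZeroSum.map {G H : Type*} [AddCommMonoid G] [AddCommMonoid H]
    {S : Multiset G} (hS : IsMinimalZeroSum S) {f : G →+ H} (hf : Function.Injective f) :
    IsMinimalZeroSum (S.map f) := by
  obtain ⟨hS0, hsum, hmin⟩ := hS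
  refine ⟨by rwa [Ne, Multiset.map_eq_zero], by rw [← map_multiset_sum, hsum, f.map_zero], ?_⟩
  intro T hT hT0 hTS
  obtain ⟨U, hU, rfl⟩ := exists_le_map_eq_of_le_map hT
  rw [← map_multiset_sum, map_ne_zero_iff f hf]
  exact hmin U hU (by rwa [Ne, Multiset.map_eq_zero] at hT0) (fun h => hTS (h ▸ rfl))

theorem IsZeroSumfree.isMinimalZeroSum_cons_neg_sum {G : Type*} [AddCommGroup G]
    {S : Multiset G} (hS : IsZeroSumfree S) : IsMinimalZeroSum (-S.sum ::ₘ S) := by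
  refine ⟨Multiset.cons_ne_zero, by rw [Multiset.sum_cons, neg_add_cancel], ?_⟩
  intro T hT hT0 hTS hsum
  by_cases hmem : -S.sum ∈ T
  · -- The complement of `T` is then a zero-sum subsequence of `S`.
    obtain ⟨U, rfl⟩ := Multiset.exists_cons_of_mem hmem
    obtain ⟨V, rfl⟩ := Multiset.le_iff_exists_add.mp ((Multiset.cons_le_cons_iff _).mp hT)
    have hV : V.sum = 0 := by
      rwa [Multiset.sum_cons, Multiset.sum_add, neg_add_rev, neg_add_cancel_right,
        neg_eq_zero] at hsum
    refine hS V (Multiset.le_add_left _ _) ?_ hV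
    rintro rfl
    exact hTS (by rw [add_zero])
  · exact hS T ((Multiset.le_cons_of_notMem hmem).mp hT) hT0 hsum

end ZeroSum

section StrongDavenport

variable {G : Type*} [AddCommMonoid G]

theorem cmul_one_eq_zero_of_nodup {S : Multiset G} (hS : S.Nodup) : cmul 1 S = 0 := by
  classical
  exact Finset.sum_eq_zero fun g _ =>
    Nat.sub_eq_zero_of_le (Multiset.nodup_iff_count_le_one.mp hS g)

theorem card_le_cmul_add_mul_card [Fintype G] (ℓ : ℕ) (S : Multiset G) :
    Multiset.card S ≤ cmul ℓ S + ℓ * Fintype.card G := by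
  let _ := Classical.decEq G
  calc Multiset.card S = ∑ g ∈ S.toFinset, S.count g := (Multiset.toFinset_sum_count_eq S).symm
    _ ≤ ∑ g ∈ S.toFinset, ((S.count g - ℓ) + ℓ) := Finset.sum_le_sum fun _ _ => le_tsub_add
    _ = cmul ℓ S + ℓ * S.toFinset.card := by
      rw [Finset.sum_add_distrib, Finset.sum_const, smul_eq_mul, mul_comm ℓ]; rfl
    _ ≤ cmul ℓ S + ℓ * Fintype.card G := by gcongr; exact Finset.card_le_univ _

theorem IsMinimalZeroSum.card_le_SDpair [Finite G] {S : Multiset G} (hS : IsMinimalZeroSum S)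
    {k ℓ : ℕ} (hcm : cmul ℓ S ≤ k) : Multiset.card S ≤ SDpair G k ℓ := by
  have := Fintype.ofFinite G
  refine le_csSup ⟨k + ℓ * Fintype.card G, ?_⟩ ⟨S, hS, hcm, rfl⟩
  rintro _ ⟨T, -, hT, rfl⟩
  exact (card_le_cmul_add_mul_card ℓ T).trans (by gcongr)

theorem IsMinimalZeroSum.card_le_SDk_of_nodup [Finite G] {S : Multiset G}
    (hS : IsMinimalZeroSum S) (hnd : S.Nodup) (k : ℕ) : Multiset.card S ≤ SDk G k :=
  hS.card_le_SDpair ((cmul_one_eq_zero_of_nodup hnd).trans_le k.zero_le)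

end StrongDavenport

section DirectSum

variable {ι : Type*} [Fintype ι] [DecidableEq ι] {G : ι → Type*}

/-- The sequence over `⨁ i, G i` obtained by placing each `S i` in its own summand. -/
def directSumSeq [∀ i, Zero (G i)] (S : ∀ i, Multiset (G i)) : Multiset (∀ i, G i) :=
  (Finset.univ : Finset ι).val.bind fun i => (S i).map (Pi.single i)

theorem mem_directSumSeq [∀ i, Zero (G i)] {S : ∀ i, Multiset (G i)} {x : ∀ i, G i} :
    x ∈ directSumSeq S ↔ ∃ i, ∃ g ∈ S i, Pi.single i g = x := by
  simp [directSumSeq]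

theorem card_directSumSeq [∀ i, Zero (G i)] (S : ∀ i, Multiset (G i)) :
    Multiset.card (directSumSeq S) = ∑ i, Multiset.card (S i) := by
  simp [directSumSeq, Multiset.card_bind]

theorem nodup_directSumSeq [∀ i, Zero (G i)] {S : ∀ i, Multiset (G i)}
    (hnd : ∀ i, (S i).Nodup) (h0 : ∀ i, 0 ∉ S i) : (directSumSeq S).Nodup := by
  refine Multiset.nodup_bind.mpr ⟨fun i _ => (hnd i).map (Pi.single_injective i), ?_⟩
  refine Finset.univ.nodup.pairwise fun i _ j _ hij => Multiset.disjoint_left.mpr ?_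
  intro x hi hj
  obtain ⟨g, hg, rfl⟩ := Multiset.mem_map.mp hi
  obtain ⟨g', -, heq⟩ := Multiset.mem_map.mp hj
  have hg0 : 0 = g := by simpa [hij] using congrFun heq i
  exact h0 i (hg0 ▸ hg)

theorem filter_map_eval_directSumSeq [∀ i, Zero (G i)] [∀ i, DecidableEq (G i)]
    {S : ∀ i, Multiset (G i)} (h0 : ∀ i, 0 ∉ S i) (j : ι) :
    ((directSumSeq S).map (Function.eval j)).filter (· ≠ 0) = S j := by
  have hblock : ∀ i, (((S i).map (Pi.single i)).map (Function.eval j)).filter (· ≠ 0) =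
      if i = j then S j else 0 := by
    intro i
    rw [Multiset.map_map]
    split_ifs with hij
    · subst hij
      simpa [Multiset.filter_eq_self] using fun g hg => ne_of_mem_of_not_mem hg (h0 i)
    · simp [Multiset.filter_eq_nil, Multiset.mem_replicate, Ne.symm hij]
  rw [directSumSeq, Multiset.map_bind, Multiset.filter_bind]
  simp only [hblock]
  exact (Finset.sum_ite_eq' Finset.univ j fun _ => S j).trans (if_pos (Finset.mem_univ j))

theorem isZeroSumfree_directSumSeq [∀ i, AddCommMonoid (G i)] {S : ∀ i, Multiset (G i)}
    (hS : ∀ i, IsZeroSumfree (S i)) : IsZeroSumfree (directSumSeq S) := by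
  classical
  intro T hT hT0 hsum
  have heval : ∀ j, ∀ x ∈ T, x j = 0 := by
    intro j
    have hle : (T.map (Function.eval j)).filter (· ≠ 0) ≤ S j :=
      filter_map_eval_directSumSeq (fun i => (hS i).zero_notMem) j ▸
        Multiset.filter_le_filter _ (Multiset.map_le_map hT)
    have hzero : ((T.map (Function.eval j)).filter (· ≠ 0)).sum = 0 := by
      rw [sum_filter_ne_zero_eq_sum]
      exact ((Pi.evalAddMonoidHom G j).map_multiset_sum T).symm.trans (congrFun hsum j)
    have hnil := not_imp_not.mp (hS j _ hle) hzero
    simpa [Multiset.filter_eq_nil] using hnil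
  obtain ⟨x, hx⟩ := Multiset.exists_mem_of_ne_zero hT0
  obtain ⟨i, g, hg, rfl⟩ := mem_directSumSeq.mp (Multiset.mem_of_le hT hx)
  have hg0 : g = 0 := by simpa using heval i _ hx
  exact (hS i).zero_notMem (hg0 ▸ hg)

theorem sum_directSumSeq_apply [∀ i, AddCommMonoid (G i)] (S : ∀ i, Multiset (G i)) (j : ι) :
    (directSumSeq S).sum j = (S j).sum := by
  have hblock : ∀ i, ((S i).map (Pi.single i)).sum = Pi.single i (S i).sum := fun i =>
    ((AddMonoidHom.single G i).map_multiset_sum (S i)).symm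
  rw [directSumSeq, Multiset.sum_bind]
  simp only [hblock]
  exact congrFun (Finset.univ_sum_single fun i => (S i).sum) j

theorem neg_sum_notMem_directSumSeq [Nontrivial ι] [∀ i, AddCommGroup (G i)]
    {S : ∀ i, Multiset (G i)} (hS : ∀ i, IsZeroSumfree (S i)) (hne : ∀ i, S i ≠ 0) :
    -(directSumSeq S).sum ∉ directSumSeq S := by
  intro hmem
  obtain ⟨i, g, -, heq⟩ := mem_directSumSeq.mp hmem
  obtain ⟨j, hij⟩ := exists_ne i
  have hsum : (S j).sum = 0 := by
    simpa [hij, sum_directSumSeq_apply, eq_comm] using congrFun heq j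
  exact hS j (S j) le_rfl (hne j) hsum

end DirectSum

theorem exists_isMinimalZeroSum_nodup_pi {ι : Type*} [Fintype ι] [Nontrivial ι] {G : ι → Type*}
    [∀ i, AddCommGroup (G i)] {S : ∀ i, Multiset (G i)} (hS : ∀ i, IsZeroSumfree (S i))
    (hne : ∀ i, S i ≠ 0) (hnd : ∀ i, (S i).Nodup) :
    ∃ T : Multiset (∀ i, G i), IsMinimalZeroSum T ∧ T.Nodup ∧
      Multiset.card T = ∑ i, Multiset.card (S i) + 1 := by
  classical
  exact ⟨-(directSumSeq S).sum ::ₘ directSumSeq S,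
    (isZeroSumfree_directSumSeq hS).isMinimalZeroSum_cons_neg_sum,
    Multiset.nodup_cons.mpr ⟨neg_sum_notMem_directSumSeq hS hne,
      nodup_directSumSeq hnd fun i => (hS i).zero_notMem⟩,
    by rw [Multiset.card_cons, card_directSumSeq]⟩

section Power

variable {r : ℕ}

/-- `D*(C_{n_1} ⊕ … ⊕ C_{n_r})`, as a function of the invariant factors `n_1 ∣ … ∣ n_r`. -/
def Dstar (n : Fin r → ℕ) : ℕ := 1 + ∑ i, (n i - 1)

theorem Dstar_divNat_add (n : Fin r → ℕ) (m : ℕ) :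
    Dstar (fun s : Fin (r * m) => n s.divNat) + m = m * Dstar n + 1 := by
  have hsum : ∑ s : Fin (r * m), (n s.divNat - 1) = m * ∑ i, (n i - 1) := by
    calc ∑ s : Fin (r * m), (n s.divNat - 1) = ∑ p : Fin r × Fin m, (n p.1 - 1) :=
          Fintype.sum_equiv finProdFinEquiv.symm _ _ fun _ => rfl
      _ = m * ∑ i, (n i - 1) := by simp [Fintype.sum_prod_type, Finset.mul_sum]
  rw [Dstar, hsum, Dstar]
  ring

/-- The canonical map from `(⨁ i, G i)^m` to the direct sum in which each `G i` is repeated `m`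
times in a row, so that a divisibility chain of invariant factors remains one. -/
def powToPi (m : ℕ) (G : Fin r → Type*) [∀ i, AddCommMonoid (G i)] :
    (Fin m → ∀ i, G i) →+ ∀ s : Fin (r * m), G s.divNat where
  toFun x s := x s.modNat s.divNat
  map_zero' := rfl
  map_add' _ _ := rfl

theorem powToPi_injective (m : ℕ) (G : Fin r → Type*) [∀ i, AddCommMonoid (G i)] :
    Function.Injective (powToPi m G) := by
  intro x y hxy
  ext j i
  have h : ∀ p : Fin r × Fin m, x p.2 p.1 = y p.2 p.1 :=
    finProdFinEquiv.symm.surjective.forall.mpr fun s => congrFun hxy s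
  exact h (i, j)

theorem Dstar_add_le_SDk_of_isZeroSumfree {n : Fin r → ℕ} [∀ i, NeZero (n i)]
    {S : Multiset (∀ i, ZMod (n i))} (hS : IsZeroSumfree S) (hnd : S.Nodup)
    (hcard : Dstar n ≤ Multiset.card S) {m : ℕ} (hm : 2 ≤ m) (k : ℕ) :
    Dstar (fun s : Fin (r * m) => n s.divNat) + m ≤
      SDk (∀ s : Fin (r * m), ZMod (n s.divNat)) k := by
  have : Nontrivial (Fin m) := Fin.nontrivial_iff_two_le.mpr hm
  have hne : S ≠ 0 := by
    rintro rfl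
    simp [Dstar] at hcard
  obtain ⟨T, hT, hTnd, hTcard⟩ :=
    exists_isMinimalZeroSum_nodup_pi (ι := Fin m) (fun _ => hS) (fun _ => hne) fun _ => hnd
  have hinj := powToPi_injective m fun i => ZMod (n i)
  calc Dstar (fun s : Fin (r * m) => n s.divNat) + m = m * Dstar n + 1 := Dstar_divNat_add n m
    _ ≤ m * Multiset.card S + 1 := by gcongr
    _ = Multiset.card (T.map (powToPi m fun i => ZMod (n i))) := by simp [hTcard]
    _ ≤ _ := (hT.map hinj).card_le_SDk_of_nodup (hTnd.map hinj) k

end Power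

section Baayen

variable {t : ℕ}

/-- The invariant factors of `C_2^{4t} ⊕ C_{4t+2}`. -/
def baayenModulus (t : ℕ) (s : Fin (4 * t + 1)) : ℕ :=
  if s = Fin.last (4 * t) then 4 * t + 2 else 2

theorem one_lt_baayenModulus (s : Fin (4 * t + 1)) : 1 < baayenModulus t s := by
  unfold baayenModulus
  split_ifs <;> omega

instance (s : Fin (4 * t + 1)) : NeZero (baayenModulus t s) :=
  ⟨(Nat.zero_lt_of_lt (one_lt_baayenModulus s)).ne'⟩

theorem baayenModulus_dvd_of_le {s s' : Fin (4 * t + 1)} (h : s ≤ s') :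
    baayenModulus t s ∣ baayenModulus t s' := by
  unfold baayenModulus
  split_ifs with hs hs'
  · exact dvd_rfl
  · exact absurd (Fin.last_le_iff.mp (hs ▸ h)) hs'
  · exact ⟨2 * t + 1, by ring⟩
  · exact dvd_rfl

theorem Dstar_baayenModulus (t : ℕ) : Dstar (baayenModulus t) = 2 * (4 * t + 1) := by
  have hinit : ∀ i : Fin (4 * t), baayenModulus t i.castSucc = 2 := fun i =>
    if_neg i.castSucc_lt_last.ne
  have hlast : baayenModulus t (Fin.last (4 * t)) = 4 * t + 2 := if_pos rfl
  simp only [Dstar, Fin.sum_univ_castSucc, hinit, hlast, Finset.sum_const, Finset.card_univ,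
    Fintype.card_fin, smul_eq_mul]
  omega

/-- The element `(e_i, c)` of `C_2^{4t} ⊕ C_{4t+2}`, where `e_0, …, e_{4t-1}` is the standard
basis of `C_2^{4t}` and `e_{4t} = e_0 + ⋯ + e_{4t-1}`. -/
def baayenTerm (t c : ℕ) (i s : Fin (4 * t + 1)) : ZMod (baayenModulus t s) :=
  ((if s = Fin.last (4 * t) then c
    else (if i = Fin.last (4 * t) then 1 else 0) + if i = s then 1 else 0 : ℕ) :
      ZMod (baayenModulus t s))

theorem sum_baayenTerm_last_eq_zero_iff {c c' : ℕ} {X Y : Finset (Fin (4 * t + 1))} :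
    (∑ i ∈ X, baayenTerm t c i + ∑ i ∈ Y, baayenTerm t c' i) (Fin.last (4 * t)) = 0 ↔
      4 * t + 2 ∣ X.card * c + Y.card * c' := by
  simp only [Pi.add_apply, Finset.sum_apply, baayenTerm, ← Nat.cast_sum, ← Nat.cast_add,
    ZMod.natCast_eq_zero_iff]
  simp [baayenModulus]

theorem sum_baayenTerm_apply_eq_zero_iff {c c' : ℕ} {X Y : Finset (Fin (4 * t + 1))}
    {s : Fin (4 * t + 1)} (hs : s ≠ Fin.last (4 * t)) :
    (∑ i ∈ X, baayenTerm t c i + ∑ i ∈ Y, baayenTerm t c' i) s = 0 ↔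
      2 ∣ ((if Fin.last (4 * t) ∈ X then 1 else 0) + if s ∈ X then 1 else 0) +
        ((if Fin.last (4 * t) ∈ Y then 1 else 0) + if s ∈ Y then 1 else 0) := by
  simp only [Pi.add_apply, Finset.sum_apply, baayenTerm, ← Nat.cast_sum, ← Nat.cast_add,
    ZMod.natCast_eq_zero_iff]
  simp only [baayenModulus, if_neg hs, Finset.sum_add_distrib, Finset.sum_ite_eq']

theorem eq_or_eq_compl_of_sum_baayenTerm_eq_zero {c c' : ℕ} {X Y : Finset (Fin (4 * t + 1))}
    (h : ∀ s ≠ Fin.last (4 * t),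
      (∑ i ∈ X, baayenTerm t c i + ∑ i ∈ Y, baayenTerm t c' i) s = 0) :
    X = Y ∨ X = Yᶜ := by
  have hiff : ∀ s, (s ∈ X ↔ s ∈ Y) ↔ (Fin.last (4 * t) ∈ X ↔ Fin.last (4 * t) ∈ Y) := by
    intro s
    by_cases hs : s = Fin.last (4 * t)
    · rw [hs]
    · have hdvd := (sum_baayenTerm_apply_eq_zero_iff hs).mp (h s hs)
      split_ifs at hdvd <;> simp_all
  by_cases hlast : Fin.last (4 * t) ∈ X ↔ Fin.last (4 * t) ∈ Y
  · exact Or.inl (Finset.ext fun s => (hiff s).mpr hlast)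
  · refine Or.inr (Finset.ext fun s => ?_)
    have := (hiff s).not.mpr hlast
    rw [Finset.mem_compl]
    tauto

theorem eq_of_baayenTerm_eq (ht : 1 ≤ t) {c c' : ℕ} {i j : Fin (4 * t + 1)}
    (h : baayenTerm t c i = baayenTerm t c' j) : i = j := by
  have hdouble : ∀ s ≠ Fin.last (4 * t), (∑ l ∈ {i}, baayenTerm t c l +
      ∑ l ∈ {j}, baayenTerm t c' l) s = 0 := by
    intro s hs
    rw [Finset.sum_singleton, Finset.sum_singleton, h, Pi.add_apply, baayenTerm, ← Nat.cast_add,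
      ZMod.natCast_eq_zero_iff, baayenModulus, if_neg hs, ← two_mul]
    exact dvd_mul_right _ _
  rcases eq_or_eq_compl_of_sum_baayenTerm_eq_zero hdouble with heq | hcompl
  · exact Finset.singleton_injective heq
  · have hcard := congrArg Finset.card hcompl
    simp only [Finset.card_compl, Finset.card_singleton, Fintype.card_fin] at hcard
    omega

theorem eq_empty_of_sum_baayenTerm_eq_zero (ht : 1 ≤ t) {X Y : Finset (Fin (4 * t + 1))}
    (h : ∑ i ∈ X, baayenTerm t 1 i + ∑ i ∈ Y, baayenTerm t (2 * t + 2) i = 0) :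
    X = ∅ ∧ Y = ∅ := by
  have hdvd := sum_baayenTerm_last_eq_zero_iff.mp (congrFun h (Fin.last (4 * t)))
  rcases eq_or_eq_compl_of_sum_baayenTerm_eq_zero fun s _ => congrFun h s with rfl | rfl
  · have hcop : Nat.Coprime (4 * t + 2) (2 * t + 3) := by
      have htwo : Nat.Coprime 2 (2 * t + 3) := by simp
      have hodd : Nat.Coprime (2 * t + 1) (2 * t + 3) := by
        rw [show 2 * t + 3 = 2 + (2 * t + 1) by ring, Nat.coprime_add_self_right]
        simp
      convert htwo.mul_left hodd using 1
      ring
    have hX : X.card < 4 * t + 2 := by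
      simpa [Nat.lt_succ_iff] using X.card_le_univ
    have hX' : 4 * t + 2 ∣ X.card :=
      hcop.dvd_of_dvd_mul_right (by convert hdvd using 1; ring)
    exact and_self_iff.mpr (Finset.card_eq_zero.mp (Nat.eq_zero_of_dvd_of_lt hX' hX))
  · have hcard : Yᶜ.card + Y.card = 4 * t + 1 := by simp [Finset.card_compl_add_card]
    have hsplit : Yᶜ.card * 1 + Y.card * (2 * t + 2) = 4 * t + 1 + (2 * t + 1) * Y.card := by
      linarith
    have hdvd' : 2 * t + 1 ∣ 4 * t + 1 := by
      rw [hsplit] at hdvd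
      exact (Nat.dvd_add_left (dvd_mul_right _ _)).mp (dvd_trans ⟨2, by ring⟩ hdvd)
    have hone : 2 * t + 1 ∣ 1 :=
      (Nat.dvd_add_right hdvd').mp (⟨2, by ring⟩ : 2 * t + 1 ∣ 4 * t + 1 + 1)
    have := Nat.le_of_dvd one_pos hone
    omega

/-- Baayen's squarefree zero-sumfree sequence of length `D*` over `C_2^{4t} ⊕ C_{4t+2}`. -/
def baayenSeq (t : ℕ) : Multiset (∀ s, ZMod (baayenModulus t s)) :=
  Finset.univ.val.map (Sum.elim (baayenTerm t 1) (baayenTerm t (2 * t + 2)))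

theorem card_baayenSeq (t : ℕ) : Multiset.card (baayenSeq t) = 2 * (4 * t + 1) := by
  simp [baayenSeq, two_mul]

theorem isZeroSumfree_baayenSeq (ht : 1 ≤ t) : IsZeroSumfree (baayenSeq t) := by
  refine isZeroSumfree_map_univ fun T hT => ?_
  rw [Finset.sum_sum_eq_sum_toLeft_add_sum_toRight] at hT
  obtain ⟨hleft, hright⟩ := eq_empty_of_sum_baayenTerm_eq_zero ht hT
  rw [← Finset.toLeft_disjSum_toRight (u := T), hleft, hright, Finset.empty_disjSum,
    Finset.map_empty]

theorem nodup_baayenSeq (ht : 1 ≤ t) : (baayenSeq t).Nodup := by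
  have hne : ∀ i j, baayenTerm t 1 i ≠ baayenTerm t (2 * t + 2) j := by
    intro i j h
    have hlast := congrFun h (Fin.last (4 * t))
    rw [baayenTerm, baayenTerm, ZMod.natCast_eq_natCast_iff] at hlast
    simp only [baayenModulus, if_true] at hlast
    have hdvd : 4 * t + 2 ∣ 2 * t + 1 := (Nat.modEq_iff_dvd' (by omega)).mp hlast
    exact absurd (Nat.le_of_dvd (by omega) hdvd) (by omega)
  exact Finset.univ.nodup.map (Function.Injective.sumElim (fun _ _ => eq_of_baayenTerm_eq ht)
    (fun _ _ => eq_of_baayenTerm_eq ht) hne)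

end Baayen

/-- Corollary: for every `k ∈ ℕ₀` and `d ∈ ℕ`, there exists a finite abelian
group `G` (given by its invariant factor decomposition
`G ≅ C_{n_1} ⊕ … ⊕ C_{n_r}` with `1 < n_1 ∣ … ∣ n_r`) such that
`SD_k(G) ≥ D*(G) + d`. -/
theorem exists_SDk_ge_Dstar_add (k d : ℕ) (hd : 1 ≤ d) :
    ∃ (r : ℕ) (n : Fin r → ℕ), (∀ i, 1 < n i) ∧
      (∀ i j : Fin r, i ≤ j → n i ∣ n j) ∧
      1 + (∑ i, (n i - 1)) + d ≤ SDk (∀ i : Fin r, ZMod (n i)) k := by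
  let n : Fin ((4 * 1 + 1) * (d + 1)) → ℕ := fun s => baayenModulus 1 s.divNat
  have hSD : Dstar n + (d + 1) ≤ SDk (∀ s, ZMod (n s)) k :=
    Dstar_add_le_SDk_of_isZeroSumfree (isZeroSumfree_baayenSeq le_rfl) (nodup_baayenSeq le_rfl)
      (by rw [Dstar_baayenModulus, card_baayenSeq]) (Nat.succ_le_succ hd) k
  exact ⟨_, n, fun s => one_lt_baayenModulus _,
    fun s s' h => baayenModulus_dvd_of_le (Nat.div_le_div_right h), Nat.le_of_succ_le hSD⟩
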